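/- Let W₁, W₂ be regular bivariate matrix pencils whose characteristic polynomials p₁ and p₂ are coprime (no nonconstant common divisor in ℂ[λ,μ]), let (λ₀,μ₀) ∈ ℂ², and assume the genericity conditions (1)–(6) hold at (λ₀,μ₀). Then (λ₀,μ₀) is a finite eigenvalue of the two-parameter problem if and only if (λ₀,μ₀) is a finite eigenvalue of the associated pair of pencils (Δ₁ − λΔ₀, Δ₂ − μΔ₀). -/

import Mathlib

open Matrix Kronecker

noncomputable section

def vkron {n₁ n₂ : ℕ} (x : Fin n₁ → ℂ) (y : Fin n₂ → ℂ) : Fin n₁ × Fin n₂ → ℂ :=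
  fun p => x p.1 * y p.2

def GKer {N : Type*} [Fintype N] (A B : Matrix N N ℂ) (ξ : ℂ) :
    Submodule ℂ (N → ℂ) :=
  Submodule.span ℂ {v | ∃ p : N → Polynomial ℂ,
    (∀ t : ℂ, (A - t • B).mulVec (fun i => (p i).eval t) = 0) ∧
    v = fun i => (p i).eval ξ}

def RedMin {N : Type*} [Fintype N] (A B : Matrix N N ℂ) : Submodule ℂ (N → ℂ) :=
  Submodule.span ℂ (⋃ ξ : ℂ, (GKer A B ξ : Set (N → ℂ)))

def nrank {N : Type*} [Fintype N] (A B : Matrix N N ℂ) : ℕ :=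
  ⨆ ξ : ℂ, (A - ξ • B).rank

def Wmat {n : ℕ} (A B C : Matrix (Fin n) (Fin n) ℂ) (l m : ℂ) :
    Matrix (Fin n) (Fin n) ℂ := A + l • B + m • C

def charPoly {n : ℕ} (A B C : Matrix (Fin n) (Fin n) ℂ) : MvPolynomial (Fin 2) ℂ :=
  Matrix.det (Matrix.of fun i j =>
    MvPolynomial.C (A i j) + MvPolynomial.X 0 * MvPolynomial.C (B i j)
      + MvPolynomial.X 1 * MvPolynomial.C (C i j))

def ev2 (p : MvPolynomial (Fin 2) ℂ) (l m : ℂ) : ℂ := MvPolynomial.eval ![l, m] p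

def Delta0 {n₁ n₂ : ℕ} (B₁ C₁ : Matrix (Fin n₁) (Fin n₁) ℂ)
    (B₂ C₂ : Matrix (Fin n₂) (Fin n₂) ℂ) :
    Matrix (Fin n₁ × Fin n₂) (Fin n₁ × Fin n₂) ℂ :=
  B₁ ⊗ₖ C₂ - C₁ ⊗ₖ B₂

def Delta1 {n₁ n₂ : ℕ} (A₁ C₁ : Matrix (Fin n₁) (Fin n₁) ℂ)
    (A₂ C₂ : Matrix (Fin n₂) (Fin n₂) ℂ) :
    Matrix (Fin n₁ × Fin n₂) (Fin n₁ × Fin n₂) ℂ :=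
  C₁ ⊗ₖ A₂ - A₁ ⊗ₖ C₂

def Delta2 {n₁ n₂ : ℕ} (A₁ B₁ : Matrix (Fin n₁) (Fin n₁) ℂ)
    (A₂ B₂ : Matrix (Fin n₂) (Fin n₂) ℂ) :
    Matrix (Fin n₁ × Fin n₂) (Fin n₁ × Fin n₂) ℂ :=
  A₁ ⊗ₖ B₂ - B₁ ⊗ₖ A₂

/-- `(λ₀,μ₀)` is a finite eigenvalue of the two-parameter problem. -/
def IsFiniteEigW {n₁ n₂ : ℕ}
    (A₁ B₁ C₁ : Matrix (Fin n₁) (Fin n₁) ℂ) (A₂ B₂ C₂ : Matrix (Fin n₂) (Fin n₂) ℂ)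
    (l₀ m₀ : ℂ) : Prop :=
  (∀ q : MvPolynomial (Fin 2) ℂ,
      q ∣ charPoly A₁ B₁ C₁ → q ∣ charPoly A₂ B₂ C₂ →
      (¬ ∃ c : ℂ, q = MvPolynomial.C c) → ev2 q l₀ m₀ ≠ 0) ∧
  (∃ x₁ : Fin n₁ → ℂ, x₁ ≠ 0 ∧ (Wmat A₁ B₁ C₁ l₀ m₀).mulVec x₁ = 0) ∧
  (∃ x₂ : Fin n₂ → ℂ, x₂ ≠ 0 ∧ (Wmat A₂ B₂ C₂ l₀ m₀).mulVec x₂ = 0)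

/-- `(λ₀,μ₀)` is a finite eigenvalue of the pair of pencils
`(Δ₁ − λΔ₀, Δ₂ − μΔ₀)`. -/
def IsFiniteEigDelta {n₁ n₂ : ℕ}
    (A₁ B₁ C₁ : Matrix (Fin n₁) (Fin n₁) ℂ) (A₂ B₂ C₂ : Matrix (Fin n₂) (Fin n₂) ℂ)
    (l₀ m₀ : ℂ) : Prop :=
  (Delta1 A₁ C₁ A₂ C₂ - l₀ • Delta0 B₁ C₁ B₂ C₂).rank
      < nrank (Delta1 A₁ C₁ A₂ C₂) (Delta0 B₁ C₁ B₂ C₂) ∧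
  (Delta2 A₁ B₁ A₂ B₂ - m₀ • Delta0 B₁ C₁ B₂ C₂).rank
      < nrank (Delta2 A₁ B₁ A₂ B₂) (Delta0 B₁ C₁ B₂ C₂) ∧
  ∃ z : Fin n₁ × Fin n₂ → ℂ, z ≠ 0 ∧
    (Delta1 A₁ C₁ A₂ C₂).mulVec z = l₀ • (Delta0 B₁ C₁ B₂ C₂).mulVec z ∧
    (Delta2 A₁ B₁ A₂ B₂).mulVec z = m₀ • (Delta0 B₁ C₁ B₂ C₂).mulVec z ∧
    z ∉ RedMin (Delta1 A₁ C₁ A₂ C₂) (Delta0 B₁ C₁ B₂ C₂) ∧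
    z ∉ RedMin (Delta2 A₁ B₁ A₂ B₂) (Delta0 B₁ C₁ B₂ C₂)

/-- Genericity conditions (1)–(6) at `(λ₀,μ₀)`. -/
def Generic {n₁ n₂ : ℕ}
    (A₁ B₁ C₁ : Matrix (Fin n₁) (Fin n₁) ℂ) (A₂ B₂ C₂ : Matrix (Fin n₂) (Fin n₂) ℂ)
    (l₀ m₀ : ℂ) : Prop :=
  -- (1) the univariate polynomial `γ ↦ pᵢ(λ₀,γ)` is not identically zero
  (∃ γ : ℂ, ev2 (charPoly A₁ B₁ C₁) l₀ γ ≠ 0) ∧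
  (∃ γ : ℂ, ev2 (charPoly A₂ B₂ C₂) l₀ γ ≠ 0) ∧
  -- (2) the univariate polynomial `β ↦ pᵢ(β,μ₀)` is not identically zero
  (∃ β : ℂ, ev2 (charPoly A₁ B₁ C₁) β m₀ ≠ 0) ∧
  (∃ β : ℂ, ev2 (charPoly A₂ B₂ C₂) β m₀ ≠ 0) ∧
  -- (3)
  (∃ ε > (0:ℝ), ∀ η : ℂ, η ≠ l₀ → ‖η - l₀‖ < ε →
    (Wmat A₁ B₁ C₁ η m₀).rank = n₁ ∧ (Wmat A₂ B₂ C₂ η m₀).rank = n₂) ∧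
  -- (4)
  (∃ ε > (0:ℝ), ∀ θ : ℂ, θ ≠ m₀ → ‖θ - m₀‖ < ε →
    (Wmat A₁ B₁ C₁ l₀ θ).rank = n₁ ∧ (Wmat A₂ B₂ C₂ l₀ θ).rank = n₂) ∧
  -- (5)
  (∀ l₁ m₁ : ℂ, IsFiniteEigW A₁ B₁ C₁ A₂ B₂ C₂ l₁ m₁ → (l₁, m₁) ≠ (l₀, m₀) →
    l₁ ≠ l₀ ∧ m₁ ≠ m₀) ∧
  -- (6)
  (∃ ε > (0:ℝ), ∀ η θ : ℂ, (η, θ) ≠ (l₀, m₀) → ‖η - l₀‖ + ‖θ - m₀‖ < ε →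
    (Wmat A₁ B₁ C₁ l₀ m₀).rank + (Wmat A₂ B₂ C₂ l₀ m₀).rank <
    (Wmat A₁ B₁ C₁ η θ).rank + (Wmat A₂ B₂ C₂ η θ).rank)

/-! Write a vector of `ℂ^(n₁ n₂)` as `z = vec Z` with `Z` an `n₂ × n₁` matrix. Then, for every
`μ`, `(Δ₁ - λ Δ₀) z = vec (W₂(λ,μ) Z C₁ᵀ - C₂ Z W₁(λ,μ)ᵀ)`, and similarly for `Δ₂`.

For `z` in the kernel of a pencil at `ξ`, lying in the minimal reducing subspace is the same as
lying in the generic kernel at `ξ`; and if the rank does not drop at `ξ`, every kernel vector at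
`ξ` lies in the generic kernel. So `(λ₀,μ₀)` is an eigenvalue of the `Δ` pencils exactly when some
joint kernel vector avoids both generic kernels.

If `det W₂(λ₀,μ₀) ≠ 0`, the polynomial matrix `adj (W₂(λ,μ₀)) W₂(λ₀,μ₀) Z` satisfies the kernel
equation and equals `det W₂(λ₀,μ₀) • Z` at `λ₀`, so every joint kernel vector is in the generic
kernel of the first pencil.

Conversely, take `Z = x₂ x₁ᵀ` from null vectors of `W₁` and `W₂`. If `P(λ)` extends `Z = P(λ₀)`
with `W₂ P C₁ᵀ = C₂ P W₁ᵀ`, coprimality of the determinants gives `C₂ P = W₂ Q` for a polynomial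
matrix `Q(λ,μ)`. Since `W₂(λ₀,μ₀) Z = 0`, the product `W₂ (Z - (μ - μ₀) Q)` is divisible by
`λ - λ₀`, hence so is `Z - (μ - μ₀) Q` as long as `λ - λ₀` does not divide `p₂`, and evaluation at
`(λ₀,μ₀)` gives `Z = 0`. By coprimality `λ - λ₀` cannot divide both `p₁` and `p₂`, so exchanging
the two pencils covers the remaining case. -/

section PolynomialMatrices

open scoped Polynomial

variable {m n K R : Type*}

lemma exists_ne_zero_mul_eq_zero [Fintype m] [DecidableEq m] [Fintype n] [DecidableEq n]
    [CommRing R] [IsDomain R] {U : Matrix n n R} {V : Matrix m m R}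
    (hU : U.det = 0) (hV : V.det = 0) :
    ∃ Z : Matrix m n R, Z ≠ 0 ∧ Z * Uᵀ = 0 ∧ V * Z = 0 := by
  obtain ⟨x, hx, hUx⟩ := Matrix.exists_mulVec_eq_zero_iff.2 hU
  obtain ⟨y, hy, hVy⟩ := Matrix.exists_mulVec_eq_zero_iff.2 hV
  obtain ⟨i, hi⟩ := Function.ne_iff.1 hx
  obtain ⟨j, hj⟩ := Function.ne_iff.1 hy
  refine ⟨vecMulVec y x, fun h => mul_ne_zero hj hi (congrFun₂ h j i), ?_, ?_⟩
  · rw [Matrix.vecMulVec_mul, Matrix.vecMul_transpose, hUx]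
    exact Matrix.ext fun _ _ => mul_zero _
  · rw [Matrix.mul_vecMulVec, hVy]
    exact Matrix.ext fun _ _ => zero_mul _

lemma exists_eq_mul_of_mul_eq_mul [Fintype m] [DecidableEq m] [Fintype n] [DecidableEq n]
    [CommRing R] [IsDomain R] [DecompositionMonoid R] {W : Matrix m m R} {V : Matrix n n R}
    {F G : Matrix m n R} (hco : IsRelPrime W.det V.det) (hW : W.det ≠ 0) (h : W * G = F * V) :
    ∃ Q : Matrix m n R, F = W * Q := by
  have hadj : V.det • (W.adjugate * F) = W.det • (G * V.adjugate) :=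
    calc V.det • (W.adjugate * F) = W.adjugate * (F * V) * V.adjugate := by
          simp only [Matrix.mul_assoc, Matrix.mul_adjugate, Matrix.mul_smul, Matrix.mul_one]
      _ = W.det • (G * V.adjugate) := by
          rw [← h, ← Matrix.mul_assoc, Matrix.adjugate_mul, Matrix.smul_mul, Matrix.one_mul,
            Matrix.smul_mul]
  have hdvd (i j) : W.det ∣ (W.adjugate * F) i j :=
    hco.dvd_of_dvd_mul_left ⟨_, congrFun₂ hadj i j⟩
  choose Q hQ using hdvd
  refine ⟨Matrix.of Q, smul_right_injective _ hW ?_⟩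
  calc W.det • F = W * (W.adjugate * F) := by
        rw [← Matrix.mul_assoc, Matrix.mul_adjugate, Matrix.smul_mul, Matrix.one_mul]
    _ = W * (W.det • Matrix.of Q) := congrArg (W * ·) (Matrix.ext hQ)
    _ = W.det • (W * Matrix.of Q) := Matrix.mul_smul _ _ _

lemma dvd_apply_of_mul_eq_smul [Fintype m] [DecidableEq m] [CommRing R] {a : R} (ha : Prime a)
    {W : Matrix m m R} (hW : ¬ a ∣ W.det) {S T : Matrix m n R} (h : W * S = a • T) (i : m) (j : n) :
    a ∣ S i j := by
  have hadj : W.det • S = a • (W.adjugate * T) := by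
    rw [← Matrix.mul_smul, ← h, ← Matrix.mul_assoc, Matrix.adjugate_mul, Matrix.smul_mul,
      Matrix.one_mul]
  exact (ha.dvd_or_dvd ⟨_, congrFun₂ hadj i j⟩).resolve_left hW

lemma exists_mul_mul_self_eq [Fintype m] [Fintype n] [Field K] (U : Matrix m n K) :
    ∃ G : Matrix n m K, U * G * U = U := by
  classical
  obtain ⟨s, hs⟩ := U.toLin'.rangeRestrict.exists_rightInverse_of_surjective
    U.toLin'.range_rangeRestrict
  obtain ⟨g, hg⟩ := s.exists_extend
  refine ⟨g.toMatrix', Matrix.toLin'.injective (LinearMap.ext fun v => ?_)⟩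
  have hgs : g (U.toLin' v) = s (U.toLin'.rangeRestrict v) :=
    LinearMap.congr_fun hg (U.toLin'.rangeRestrict v)
  rw [Matrix.toLin'_mul, Matrix.toLin'_mul, Matrix.toLin'_toMatrix']
  calc U.toLin' (g (U.toLin' v)) = U.toLin' (s (U.toLin'.rangeRestrict v)) := by rw [hgs]
    _ = U.toLin' v := congrArg Subtype.val (LinearMap.congr_fun hs (U.toLin'.rangeRestrict v))

lemma mulVec_adjugate_mulVec_eq_zero [Fintype m] [Fintype n] [DecidableEq n] [Field K]
    {U V : Matrix m n K} {G : Matrix n m K} (hG : U * G * U = U) (hrank : V.rank ≤ U.rank)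
    (hdet : (G * V + (1 - G * U)).det ≠ 0) {z : n → K} (hz : U *ᵥ z = 0) :
    V *ᵥ ((G * V + (1 - G * U)).adjugate *ᵥ z) = 0 := by
  -- `1 - G * U` is a projection onto `ker U`; on `ker V` it agrees with an invertible matrix, and
  -- `dim ker V ≥ dim ker U`, so it maps `ker V` onto `ker U`.
  have hproj (v : n → K) : U *ᵥ ((1 - G * U) *ᵥ v) = 0 := by
    rw [Matrix.mulVec_mulVec, Matrix.mul_sub, Matrix.mul_one, ← Matrix.mul_assoc, hG, sub_self,
      Matrix.zero_mulVec]
  have hres {v : n → K} (hv : V *ᵥ v = 0) :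
      (G * V + (1 - G * U)) *ᵥ v = (1 - G * U) *ᵥ v := by
    rw [Matrix.add_mulVec, ← Matrix.mulVec_mulVec, hv, Matrix.mulVec_zero, zero_add]
  let π : LinearMap.ker V.mulVecLin →ₗ[K] LinearMap.ker U.mulVecLin :=
    (1 - G * U).mulVecLin.restrict fun v _ => hproj v
  have hinj : Function.Injective π := by
    refine (injective_iff_map_eq_zero π).2 fun v hv => Subtype.ext ?_
    refine Matrix.eq_zero_of_mulVec_eq_zero hdet ?_
    exact (hres v.2).trans (congrArg Subtype.val hv)
  have hfinrank : Module.finrank K (LinearMap.ker V.mulVecLin) =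
      Module.finrank K (LinearMap.ker U.mulVecLin) := by
    have hV := V.mulVecLin.finrank_range_add_finrank_ker
    have hU := U.mulVecLin.finrank_range_add_finrank_ker
    have hle := LinearMap.finrank_le_finrank_of_injective hinj
    simp only [Matrix.rank] at hrank
    omega
  obtain ⟨k, hk⟩ :=
    (LinearMap.injective_iff_surjective_of_finrank_eq_finrank hfinrank).1 hinj ⟨z, hz⟩
  have hkz : (G * V + (1 - G * U)) *ᵥ k = z := (hres k.2).trans (congrArg Subtype.val hk)
  have hVk : V *ᵥ k = 0 := k.2
  rw [← hkz, Matrix.mulVec_mulVec k.1 (adjugate _), Matrix.adjugate_mul, Matrix.smul_mulVec,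
    Matrix.one_mulVec, Matrix.mulVec_smul, hVk, smul_zero]

lemma eval_comp_mulVec [CommRing R] [Fintype n] (M : Matrix m n R[X]) (p : n → R[X]) (t : R) :
    Polynomial.eval t ∘ (M *ᵥ p) = M.map (Polynomial.eval t) *ᵥ (Polynomial.eval t ∘ p) :=
  funext fun i => (Polynomial.evalRingHom t).map_mulVec M p i

lemma funext_eval [CommRing R] [IsDomain R] [Infinite R] {p q : n → R[X]}
    (h : ∀ t, Polynomial.eval t ∘ p = Polynomial.eval t ∘ q) : p = q :=
  funext fun i => Polynomial.funext fun t => congrFun (h t) i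

lemma map_eval_adjugate [CommRing R] [Fintype n] [DecidableEq n] (M : Matrix n n R[X]) (t : R) :
    M.adjugate.map (Polynomial.eval t) = (M.map (Polynomial.eval t)).adjugate :=
  (Polynomial.evalRingHom t).map_adjugate M

lemma map_eval_mul {l : Type*} [CommRing R] [Fintype n] (M : Matrix m n R[X])
    (N : Matrix n l R[X]) (t : R) :
    (M * N).map (Polynomial.eval t) = M.map (Polynomial.eval t) * N.map (Polynomial.eval t) :=
  Matrix.map_mul (f := Polynomial.evalRingHom t)

lemma map_C_map_eval [CommRing R] (M : Matrix m n R) (t : R) :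
    (M.map Polynomial.C).map (Polynomial.eval t) = M := by
  ext i j
  simp

lemma exists_mulVec_eq_zero_of_rank_le [Finite m] [Fintype n] [Field K] [Infinite K]
    (M : Matrix m n K[X]) {ξ : K}
    (hrank : ∀ t, (M.map (Polynomial.eval t)).rank ≤ (M.map (Polynomial.eval ξ)).rank)
    {z : n → K} (hz : M.map (Polynomial.eval ξ) *ᵥ z = 0) :
    ∃ p : n → K[X], M *ᵥ p = 0 ∧ Polynomial.eval ξ ∘ p = z := by
  classical
  cases nonempty_fintype m
  obtain ⟨G, hG⟩ := exists_mul_mul_self_eq (M.map (Polynomial.eval ξ))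
  let N : Matrix n n K[X] :=
    G.map Polynomial.C * M + (1 - G * M.map (Polynomial.eval ξ)).map Polynomial.C
  have hN (t : K) : N.map (Polynomial.eval t) =
      G * M.map (Polynomial.eval t) + (1 - G * M.map (Polynomial.eval ξ)) := by
    rw [Matrix.map_add _ (fun _ _ => Polynomial.eval_add), map_eval_mul, map_C_map_eval,
      map_C_map_eval]
  have hNξ : N.map (Polynomial.eval ξ) = 1 := by rw [hN, add_sub_cancel]
  let p : n → K[X] := N.adjugate *ᵥ (Polynomial.C ∘ z)
  have hp (t : K) : Polynomial.eval t ∘ p = (N.map (Polynomial.eval t)).adjugate *ᵥ z := by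
    rw [eval_comp_mulVec, map_eval_adjugate]
    congr 1
    ext i
    exact Polynomial.eval_C
  have hdet (t : K) : N.det.eval t = (N.map (Polynomial.eval t)).det :=
    (Polynomial.evalRingHom t).map_det N
  have hdetN : N.det ≠ 0 := by
    intro h
    simpa [h, hNξ] using hdet ξ
  refine ⟨p, smul_right_injective _ hdetN (funext_eval fun t => funext fun i => ?_), ?_⟩
  · by_cases ht : N.det.eval t = 0
    · simp [ht]
    · have hMp : M.map (Polynomial.eval t) *ᵥ (Polynomial.eval t ∘ p) = 0 := by
        rw [hp, hN]
        exact mulVec_adjugate_mulVec_eq_zero hG (hrank t) (by rwa [← hN, ← hdet]) hz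
      rw [← eval_comp_mulVec] at hMp
      simpa [ht] using congrFun hMp i
  · rw [hp, hNξ, Matrix.adjugate_one, Matrix.one_mulVec]

/-- The pencil `A - λ B`, as a matrix of polynomials in `λ`; evaluating its polynomial kernel
vectors at `ξ` gives the generic kernel at `ξ`. -/
def pencil [CommRing R] (A B : Matrix m n R) : Matrix m n R[X] :=
  A.map Polynomial.C - (Polynomial.X : R[X]) • B.map Polynomial.C

lemma pencil_map_eval [CommRing R] (A B : Matrix m n R) (t : R) :
    (pencil A B).map (Polynomial.eval t) = A - t • B := by
  ext i j
  simp only [pencil, Matrix.map_apply, Matrix.sub_apply, Matrix.smul_apply, smul_eq_mul,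
    Polynomial.eval_sub, Polynomial.eval_mul, Polynomial.eval_X, Polynomial.eval_C]

lemma pencil_mulVec_eq_zero_iff [CommRing R] [IsDomain R] [Infinite R] [Fintype n]
    {A B : Matrix m n R} {p : n → R[X]} :
    pencil A B *ᵥ p = 0 ↔ ∀ t, (A - t • B) *ᵥ (Polynomial.eval t ∘ p) = 0 := by
  have heval (t : R) :
      Polynomial.eval t ∘ (pencil A B *ᵥ p) = (A - t • B) *ᵥ (Polynomial.eval t ∘ p) := by
    rw [eval_comp_mulVec, pencil_map_eval]
  refine ⟨fun h t => ?_, fun h => funext_eval fun t => ?_⟩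
  · rw [← heval, h]
    exact funext fun _ => Polynomial.eval_zero
  · rw [heval, h]
    exact funext fun _ => Polynomial.eval_zero.symm

lemma pencil_mulVec_C [CommRing R] [Fintype n] {A B : Matrix m n R} {v : n → R} {ξ : R}
    (hv : A *ᵥ v = ξ • B *ᵥ v) :
    pencil A B *ᵥ (Polynomial.C ∘ v) =
      (Polynomial.C ξ - Polynomial.X) • (Polynomial.C ∘ (B *ᵥ v)) := by
  have hC (M : Matrix m n R) :
      M.map Polynomial.C *ᵥ (Polynomial.C ∘ v) = Polynomial.C ∘ (M *ᵥ v) :=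
    (funext fun i => Polynomial.C.map_mulVec M v i).symm
  rw [pencil, Matrix.sub_mulVec, Matrix.smul_mulVec, hC, hC, hv, sub_smul]
  congr 1
  exact funext fun i => Polynomial.C_mul

end PolynomialMatrices

section GenericKernel

open scoped Polynomial

variable {N : Type*} [Fintype N] {A B : Matrix N N ℂ} {ξ : ℂ} {v : N → ℂ}

lemma mem_GKer_iff :
    v ∈ GKer A B ξ ↔ ∃ p : N → ℂ[X], pencil A B *ᵥ p = 0 ∧ Polynomial.eval ξ ∘ p = v := by
  let S : Submodule ℂ (N → ℂ) :=
    (LinearMap.ker ((pencil A B).mulVecLin.restrictScalars ℂ)).map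
      ((Polynomial.leval ξ).compLeft N)
  have hS : GKer A B ξ = S := by
    rw [GKer, ← Submodule.span_eq S]
    congr 1
    ext w
    exact exists_congr fun p => and_congr pencil_mulVec_eq_zero_iff.symm eq_comm
  rw [hS]
  exact Iff.rfl

lemma GKer_le_RedMin : GKer A B ξ ≤ RedMin A B := fun _ hv =>
  Submodule.subset_span (Set.mem_iUnion.2 ⟨ξ, hv⟩)

lemma GKer_neg : GKer (-A) (-B) ξ = GKer A B ξ := by
  ext v
  simp only [mem_GKer_iff, pencil_mulVec_eq_zero_iff, smul_neg, ← neg_sub', Matrix.neg_mulVec,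
    neg_eq_zero]

lemma exists_pencil_mulVec_eq_of_mem_GKer (hv : v ∈ GKer A B ξ) :
    ∃ w : N → ℂ[X], pencil A B *ᵥ w = Polynomial.C ∘ (B *ᵥ v) := by
  obtain ⟨p, hp, rfl⟩ := mem_GKer_iff.1 hv
  set v := Polynomial.eval ξ ∘ p
  have hker : A *ᵥ v = ξ • B *ᵥ v := by
    have h := pencil_mulVec_eq_zero_iff.1 hp ξ
    rwa [Matrix.sub_mulVec, Matrix.smul_mulVec, sub_eq_zero] at h
  choose w hw using fun i => Polynomial.X_sub_C_dvd_sub_C_eval (a := ξ) (p := p i)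
  have hpw : p = Polynomial.C ∘ v + (Polynomial.X - Polynomial.C ξ) • w :=
    funext fun i => eq_add_of_sub_eq' (hw i)
  refine ⟨w, smul_right_injective _ (Polynomial.X_sub_C_ne_zero ξ) ?_⟩
  rw [hpw, Matrix.mulVec_add, pencil_mulVec_C hker, Matrix.mulVec_smul, ← neg_sub, neg_smul,
    neg_add_eq_zero] at hp
  exact hp.symm

lemma exists_pencil_mulVec_eq_of_mem_RedMin (hv : v ∈ RedMin A B) :
    ∃ w : N → ℂ[X], pencil A B *ᵥ w = Polynomial.C ∘ (B *ᵥ v) := by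
  induction hv using Submodule.span_induction with
  | mem v hv =>
    obtain ⟨ξ, hξ⟩ := Set.mem_iUnion.1 hv
    exact exists_pencil_mulVec_eq_of_mem_GKer hξ
  | zero => exact ⟨0, by ext; simp⟩
  | add u v _ _ hu hv =>
    obtain ⟨a, ha⟩ := hu
    obtain ⟨b, hb⟩ := hv
    exact ⟨a + b, by ext1; simp [Matrix.mulVec_add, ha, hb]⟩
  | smul c v _ hv =>
    obtain ⟨b, hb⟩ := hv
    exact ⟨c • b, by ext1; simp [Matrix.mulVec_smul, hb, Polynomial.smul_eq_C_mul]⟩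

lemma mem_RedMin_iff_mem_GKer (hker : (A - ξ • B) *ᵥ v = 0) :
    v ∈ RedMin A B ↔ v ∈ GKer A B ξ := by
  refine ⟨fun hv => ?_, fun hv => GKer_le_RedMin hv⟩
  obtain ⟨w, hw⟩ := exists_pencil_mulVec_eq_of_mem_RedMin hv
  rw [Matrix.sub_mulVec, Matrix.smul_mulVec, sub_eq_zero] at hker
  refine mem_GKer_iff.2 ⟨Polynomial.C ∘ v + (Polynomial.X - Polynomial.C ξ) • w, ?_, ?_⟩
  · rw [Matrix.mulVec_add, pencil_mulVec_C hker, Matrix.mulVec_smul, hw, ← neg_sub, neg_smul,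
      neg_add_cancel]
  · ext i
    simp

lemma rank_lt_nrank_of_notMem_GKer (hker : (A - ξ • B) *ᵥ v = 0) (hv : v ∉ GKer A B ξ) :
    (A - ξ • B).rank < nrank A B := by
  by_contra! hle
  refine hv (mem_GKer_iff.2 (exists_mulVec_eq_zero_of_rank_le _ (fun t => ?_) ?_))
  · rw [pencil_map_eval, pencil_map_eval]
    refine (le_ciSup (f := fun t : ℂ => (A - t • B).rank) ⟨Fintype.card N, ?_⟩ t).trans hle
    rintro _ ⟨t, rfl⟩
    exact Matrix.rank_le_card_width _
  · rwa [pencil_map_eval]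

end GenericKernel

section OperatorDeterminants

open scoped Polynomial

variable {n₁ n₂ : ℕ} {A₁ B₁ C₁ : Matrix (Fin n₁) (Fin n₁) ℂ}
  {A₂ B₂ C₂ : Matrix (Fin n₂) (Fin n₂) ℂ}

lemma Wmat_swap {n : ℕ} (A B C : Matrix (Fin n) (Fin n) ℂ) (l m : ℂ) :
    Wmat A C B m l = Wmat A B C l m :=
  add_right_comm _ _ _

lemma Delta0_swap : Delta0 B₁ C₁ B₂ C₂ = -Delta0 C₁ B₁ C₂ B₂ :=
  (neg_sub _ _).symm

lemma Delta2_eq_neg_Delta1 : Delta2 A₁ B₁ A₂ B₂ = -Delta1 A₁ B₁ A₂ B₂ :=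
  (neg_sub _ _).symm

lemma GKer_Delta2 (ξ : ℂ) :
    GKer (Delta2 A₁ B₁ A₂ B₂) (Delta0 B₁ C₁ B₂ C₂) ξ =
      GKer (Delta1 A₁ B₁ A₂ B₂) (Delta0 C₁ B₁ C₂ B₂) ξ := by
  rw [Delta2_eq_neg_Delta1, Delta0_swap, GKer_neg]

lemma Delta1_sub_smul_Delta0_mulVec_vec (t m : ℂ) (Z : Matrix (Fin n₂) (Fin n₁) ℂ) :
    (Delta1 A₁ C₁ A₂ C₂ - t • Delta0 B₁ C₁ B₂ C₂) *ᵥ vec Z =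
      vec (Wmat A₂ B₂ C₂ t m * Z * C₁ᵀ - C₂ * Z * (Wmat A₁ B₁ C₁ t m)ᵀ) := by
  simp only [Delta1, Delta0, Wmat, Matrix.sub_mulVec, Matrix.smul_mulVec,
    Matrix.kronecker_mulVec_vec, ← Matrix.vec_sub, ← Matrix.vec_smul, Matrix.vec_inj,
    Matrix.transpose_add, Matrix.transpose_smul, Matrix.add_mul, Matrix.mul_add, Matrix.smul_mul,
    Matrix.mul_smul, smul_sub]
  abel

lemma Delta1_sub_smul_Delta0_mulVec_vec_eq_zero_iff (t m : ℂ) {Z : Matrix (Fin n₂) (Fin n₁) ℂ} :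
    (Delta1 A₁ C₁ A₂ C₂ - t • Delta0 B₁ C₁ B₂ C₂) *ᵥ vec Z = 0 ↔
      Wmat A₂ B₂ C₂ t m * Z * C₁ᵀ = C₂ * Z * (Wmat A₁ B₁ C₁ t m)ᵀ := by
  rw [Delta1_sub_smul_Delta0_mulVec_vec t m, Matrix.vec_eq_zero_iff, sub_eq_zero]

lemma Delta2_sub_smul_Delta0_mulVec_vec_eq_zero_iff (l t : ℂ) {Z : Matrix (Fin n₂) (Fin n₁) ℂ} :
    (Delta2 A₁ B₁ A₂ B₂ - t • Delta0 B₁ C₁ B₂ C₂) *ᵥ vec Z = 0 ↔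
      Wmat A₂ B₂ C₂ l t * Z * B₁ᵀ = B₂ * Z * (Wmat A₁ B₁ C₁ l t)ᵀ := by
  rw [Delta2_eq_neg_Delta1, Delta0_swap, smul_neg, ← neg_sub', Matrix.neg_mulVec, neg_eq_zero,
    Delta1_sub_smul_Delta0_mulVec_vec_eq_zero_iff t l, Wmat_swap, Wmat_swap A₁]

lemma vec_mem_GKer_Delta1_iff {ξ : ℂ} {Z : Matrix (Fin n₂) (Fin n₁) ℂ} :
    vec Z ∈ GKer (Delta1 A₁ C₁ A₂ C₂) (Delta0 B₁ C₁ B₂ C₂) ξ ↔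
      ∃ P : Matrix (Fin n₂) (Fin n₁) ℂ[X],
        (∀ t m, Wmat A₂ B₂ C₂ t m * P.map (Polynomial.eval t) * C₁ᵀ =
          C₂ * P.map (Polynomial.eval t) * (Wmat A₁ B₁ C₁ t m)ᵀ) ∧
        P.map (Polynomial.eval ξ) = Z := by
  have hvec (t : ℂ) (P : Matrix (Fin n₂) (Fin n₁) ℂ[X]) :
      Polynomial.eval t ∘ vec P = vec (P.map (Polynomial.eval t)) := rfl
  simp only [mem_GKer_iff, Matrix.vec_bijective.surjective.exists, pencil_mulVec_eq_zero_iff, hvec,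
    Matrix.vec_inj]
  refine exists_congr fun P => and_congr_left' (forall_congr' fun t => ?_)
  exact ⟨fun h m => (Delta1_sub_smul_Delta0_mulVec_vec_eq_zero_iff t m).1 h,
    fun h => (Delta1_sub_smul_Delta0_mulVec_vec_eq_zero_iff t 0).2 (h 0)⟩

lemma vec_transpose_mem_GKer_Delta1 {ξ : ℂ} {Z : Matrix (Fin n₂) (Fin n₁) ℂ}
    (hZ : vec Z ∈ GKer (Delta1 A₁ C₁ A₂ C₂) (Delta0 B₁ C₁ B₂ C₂) ξ) :
    vec Zᵀ ∈ GKer (Delta1 A₂ C₂ A₁ C₁) (Delta0 B₂ C₂ B₁ C₁) ξ := by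
  obtain ⟨P, hP, rfl⟩ := vec_mem_GKer_Delta1_iff.1 hZ
  refine vec_mem_GKer_Delta1_iff.2 ⟨Pᵀ, fun t m => ?_, rfl⟩
  simpa only [Matrix.transpose_mul, Matrix.transpose_transpose, Matrix.transpose_map,
    Matrix.mul_assoc] using (congrArg Matrix.transpose (hP t m)).symm

end OperatorDeterminants

section RegularPencil

variable {n₁ n₂ : ℕ} {A₁ B₁ C₁ : Matrix (Fin n₁) (Fin n₁) ℂ}
  {A₂ B₂ C₂ : Matrix (Fin n₂) (Fin n₂) ℂ} {l₀ m₀ : ℂ} {Z : Matrix (Fin n₂) (Fin n₁) ℂ}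

lemma Wmat_eq_add {n : ℕ} (A B C : Matrix (Fin n) (Fin n) ℂ) (l₀ l m : ℂ) :
    Wmat A B C l m = Wmat A B C l₀ m + (l - l₀) • B := by
  simp only [Wmat, sub_smul]
  abel

lemma Wmat_mul_adjugate_mul_eq
    (hB : Wmat A₂ B₂ C₂ l₀ m₀ * Z * B₁ᵀ = B₂ * Z * (Wmat A₁ B₁ C₁ l₀ m₀)ᵀ)
    (hC : Wmat A₂ B₂ C₂ l₀ m₀ * Z * C₁ᵀ = C₂ * Z * (Wmat A₁ B₁ C₁ l₀ m₀)ᵀ) (t : ℂ) :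
    Wmat A₂ B₂ C₂ t m₀ * ((Wmat A₂ B₂ C₂ t m₀).adjugate * (Wmat A₂ B₂ C₂ l₀ m₀ * Z)) * C₁ᵀ =
      C₂ * ((Wmat A₂ B₂ C₂ t m₀).adjugate * (Wmat A₂ B₂ C₂ l₀ m₀ * Z)) *
        (Wmat A₁ B₁ C₁ t m₀)ᵀ := by
  have hshift : Wmat A₂ B₂ C₂ l₀ m₀ * Z * (Wmat A₁ B₁ C₁ t m₀)ᵀ =
      Wmat A₂ B₂ C₂ t m₀ * (Z * (Wmat A₁ B₁ C₁ l₀ m₀)ᵀ) := by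
    rw [Wmat_eq_add A₁ B₁ C₁ l₀ t, Wmat_eq_add A₂ B₂ C₂ l₀ t, Matrix.transpose_add,
      Matrix.transpose_smul, Matrix.mul_add, Matrix.mul_smul, hB, Matrix.add_mul, Matrix.smul_mul,
      Matrix.mul_assoc, Matrix.mul_assoc B₂]
  calc _ = (Wmat A₂ B₂ C₂ t m₀).det • (Wmat A₂ B₂ C₂ l₀ m₀ * Z * C₁ᵀ) := by
        rw [← Matrix.mul_assoc _ (adjugate _), Matrix.mul_adjugate, Matrix.smul_mul,
          Matrix.one_mul, Matrix.smul_mul]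
    _ = (Wmat A₂ B₂ C₂ t m₀).det • (C₂ * Z * (Wmat A₁ B₁ C₁ l₀ m₀)ᵀ) := by rw [hC]
    _ = C₂ * ((Wmat A₂ B₂ C₂ t m₀).adjugate *
          (Wmat A₂ B₂ C₂ t m₀ * (Z * (Wmat A₁ B₁ C₁ l₀ m₀)ᵀ))) := by
        rw [← Matrix.mul_assoc (adjugate _), Matrix.adjugate_mul, Matrix.smul_mul,
          Matrix.one_mul, Matrix.mul_smul, Matrix.mul_assoc]
    _ = _ := by rw [← hshift, ← Matrix.mul_assoc (adjugate _), ← Matrix.mul_assoc C₂]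

lemma vec_mem_GKer_Delta1_of_det_ne_zero (hdet : (Wmat A₂ B₂ C₂ l₀ m₀).det ≠ 0)
    (hB : Wmat A₂ B₂ C₂ l₀ m₀ * Z * B₁ᵀ = B₂ * Z * (Wmat A₁ B₁ C₁ l₀ m₀)ᵀ)
    (hC : Wmat A₂ B₂ C₂ l₀ m₀ * Z * C₁ᵀ = C₂ * Z * (Wmat A₁ B₁ C₁ l₀ m₀)ᵀ) :
    vec Z ∈ GKer (Delta1 A₁ C₁ A₂ C₂) (Delta0 B₁ C₁ B₂ C₂) l₀ := by
  have hW (t : ℂ) : (pencil (A₂ + m₀ • C₂) (-B₂)).map (Polynomial.eval t) = Wmat A₂ B₂ C₂ t m₀ := by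
    rw [pencil_map_eval, Wmat, smul_neg, sub_neg_eq_add, add_right_comm]
  let P := (pencil (A₂ + m₀ • C₂) (-B₂)).adjugate *
    (Wmat A₂ B₂ C₂ l₀ m₀ * Z).map Polynomial.C
  have hP (t : ℂ) : P.map (Polynomial.eval t) =
      (Wmat A₂ B₂ C₂ t m₀).adjugate * (Wmat A₂ B₂ C₂ l₀ m₀ * Z) := by
    rw [map_eval_mul, map_eval_adjugate, hW, map_C_map_eval]
  have hP₀ : P.map (Polynomial.eval l₀) = (Wmat A₂ B₂ C₂ l₀ m₀).det • Z := by
    rw [hP, ← Matrix.mul_assoc, Matrix.adjugate_mul, Matrix.smul_mul, Matrix.one_mul]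
  rw [← Submodule.smul_mem_iff _ hdet, ← Matrix.vec_smul]
  refine vec_mem_GKer_Delta1_iff.2 ⟨P, fun t m => ?_, hP₀⟩
  rw [← Delta1_sub_smul_Delta0_mulVec_vec_eq_zero_iff,
    Delta1_sub_smul_Delta0_mulVec_vec_eq_zero_iff t m₀, hP]
  exact Wmat_mul_adjugate_mul_eq hB hC t

end RegularPencil

section CoprimeCharPoly

open scoped Polynomial

variable {k l σ K : Type*} [Field K]

lemma mvPolynomial_prime_X_sub_C (i : σ) (c : K) :
    Prime (MvPolynomial.X i - MvPolynomial.C c : MvPolynomial σ K) := by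
  classical
  have hdeg : (MvPolynomial.X i - MvPolynomial.C c : MvPolynomial σ K).totalDegree = 1 := by
    rw [sub_eq_add_neg, ← map_neg, MvPolynomial.totalDegree_add_eq_left_of_totalDegree_lt] <;> simp
  refine (MvPolynomial.irreducible_of_totalDegree_eq_one hdeg fun x hx => ?_).prime
  have hx1 := hx (Finsupp.single i 1)
  rw [MvPolynomial.coeff_sub, MvPolynomial.coeff_C, if_neg (by simp [eq_comm])] at hx1
  simpa using hx1

lemma mvPolynomial_isRelPrime_of_forall_dvd_eq_C [Nonempty σ] {p q : MvPolynomial σ K}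
    (h : ∀ r, r ∣ p → r ∣ q → ∃ c, r = MvPolynomial.C c) : IsRelPrime p q := by
  intro r hp hq
  obtain ⟨c, rfl⟩ := h r hp hq
  have hc : c ≠ 0 := by
    rintro rfl
    rw [map_zero, zero_dvd_iff] at hp hq
    obtain ⟨i⟩ := ‹Nonempty σ›
    obtain ⟨c, hX⟩ := h (MvPolynomial.X i) (hp ▸ dvd_zero _) (hq ▸ dvd_zero _)
    simpa using congrArg MvPolynomial.totalDegree hX
  exact hc.isUnit.map MvPolynomial.C

lemma matrix_ext_of_map_eval [Infinite K] {M N : Matrix k l (MvPolynomial σ K)}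
    (h : ∀ x, M.map (MvPolynomial.eval x) = N.map (MvPolynomial.eval x)) : M = N :=
  Matrix.ext fun i j => MvPolynomial.funext fun x => congrFun₂ (h x) i j

lemma map_mvPolynomialC_map_eval (M : Matrix k l K) (x : σ → K) :
    (M.map MvPolynomial.C).map (MvPolynomial.eval x) = M := by
  ext i j
  exact MvPolynomial.eval_C _

lemma map_aeval_X_map_eval (P : Matrix k l K[X]) (s : σ) (x : σ → K) :
    (P.map (Polynomial.aeval (MvPolynomial.X s))).map (MvPolynomial.eval x) =
      P.map (Polynomial.eval (x s)) := by
  ext i j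
  simpa using
    (Polynomial.aeval_algHom_apply (MvPolynomial.aeval x) (MvPolynomial.X s) (P i j)).symm

lemma exists_map_aeval_X_eq_add (P : Matrix k l K[X]) (s : σ) (c : K) :
    ∃ P' : Matrix k l (MvPolynomial σ K), P.map (Polynomial.aeval (MvPolynomial.X s)) =
      (P.map (Polynomial.eval c)).map MvPolynomial.C +
        (MvPolynomial.X s - MvPolynomial.C c) • P' := by
  choose P' hP' using fun i j => Polynomial.X_sub_C_dvd_sub_C_eval (a := c) (p := P i j)
  refine ⟨(Matrix.of P').map (Polynomial.aeval (MvPolynomial.X s)), Matrix.ext fun i j => ?_⟩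
  simpa [sub_eq_iff_eq_add'] using
    congrArg (Polynomial.aeval (MvPolynomial.X s : MvPolynomial σ K)) (hP' i j)

/-- The bivariate pencil `A + λ B + μ C` as a matrix of polynomials in `λ = X 0` and `μ = X 1`,
whose determinant is `charPoly A B C`. -/
def bivariatePencil {n : ℕ} (A B C : Matrix (Fin n) (Fin n) ℂ) :
    Matrix (Fin n) (Fin n) (MvPolynomial (Fin 2) ℂ) :=
  Matrix.of fun i j => MvPolynomial.C (A i j) + MvPolynomial.X 0 * MvPolynomial.C (B i j)
    + MvPolynomial.X 1 * MvPolynomial.C (C i j)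

lemma det_bivariatePencil {n : ℕ} (A B C : Matrix (Fin n) (Fin n) ℂ) :
    (bivariatePencil A B C).det = charPoly A B C := rfl

lemma bivariatePencil_map_eval {n : ℕ} (A B C : Matrix (Fin n) (Fin n) ℂ) (x : Fin 2 → ℂ) :
    (bivariatePencil A B C).map (MvPolynomial.eval x) = Wmat A B C (x 0) (x 1) := by
  ext i j
  simp [bivariatePencil, Wmat]

lemma bivariatePencil_eq_add {n : ℕ} (A B C : Matrix (Fin n) (Fin n) ℂ) (l m : ℂ) :
    bivariatePencil A B C = (Wmat A B C l m).map MvPolynomial.C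
      + (MvPolynomial.X 0 - MvPolynomial.C l : MvPolynomial (Fin 2) ℂ) • B.map MvPolynomial.C
      + (MvPolynomial.X 1 - MvPolynomial.C m : MvPolynomial (Fin 2) ℂ) • C.map MvPolynomial.C := by
  refine Matrix.ext fun i j => ?_
  simp only [bivariatePencil, Wmat, Matrix.of_apply, Matrix.add_apply, Matrix.smul_apply,
    Matrix.map_apply, smul_eq_mul, map_add, map_mul]
  ring

lemma charPoly_swap {n : ℕ} (A B C : Matrix (Fin n) (Fin n) ℂ) :
    charPoly A C B = MvPolynomial.rename (Equiv.swap 0 1) (charPoly A B C) := by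
  rw [charPoly, charPoly, AlgHom.map_det]
  congr 1
  ext i j : 2
  simp [add_right_comm]

variable {n₁ n₂ : ℕ} {A₁ B₁ C₁ : Matrix (Fin n₁) (Fin n₁) ℂ}
  {A₂ B₂ C₂ : Matrix (Fin n₂) (Fin n₂) ℂ} {l₀ m₀ : ℂ} {Z : Matrix (Fin n₂) (Fin n₁) ℂ}

lemma isRelPrime_charPoly_swap (hco : IsRelPrime (charPoly A₁ B₁ C₁) (charPoly A₂ B₂ C₂)) :
    IsRelPrime (charPoly A₁ C₁ B₁) (charPoly A₂ C₂ B₂) := by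
  refine IsRelPrime.of_map (MvPolynomial.renameEquiv ℂ (Equiv.swap (0 : Fin 2) 1)) ?_
  simpa only [MvPolynomial.renameEquiv_apply, ← charPoly_swap] using hco

lemma exists_map_C_mul_eq_bivariatePencil_mul
    (hco : IsRelPrime (charPoly A₁ B₁ C₁) (charPoly A₂ B₂ C₂)) (hp₂ : charPoly A₂ B₂ C₂ ≠ 0)
    {P : Matrix (Fin n₂) (Fin n₁) ℂ[X]}
    (hP : ∀ t m, Wmat A₂ B₂ C₂ t m * P.map (Polynomial.eval t) * C₁ᵀ =
      C₂ * P.map (Polynomial.eval t) * (Wmat A₁ B₁ C₁ t m)ᵀ) :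
    ∃ Q : Matrix (Fin n₂) (Fin n₁) (MvPolynomial (Fin 2) ℂ),
      C₂.map (MvPolynomial.C (σ := Fin 2)) *
          P.map (Polynomial.aeval (MvPolynomial.X 0 : MvPolynomial (Fin 2) ℂ)) =
        bivariatePencil A₂ B₂ C₂ * Q := by
  let P' : Matrix (Fin n₂) (Fin n₁) (MvPolynomial (Fin 2) ℂ) :=
    P.map (Polynomial.aeval (MvPolynomial.X 0))
  have hmul : bivariatePencil A₂ B₂ C₂ * (P' * C₁ᵀ.map (MvPolynomial.C (σ := Fin 2))) =
      C₂.map (MvPolynomial.C (σ := Fin 2)) * P' * (bivariatePencil A₁ B₁ C₁)ᵀ := by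
    refine matrix_ext_of_map_eval fun x => ?_
    simp only [P', Matrix.map_mul, Matrix.transpose_map, map_aeval_X_map_eval,
      map_mvPolynomialC_map_eval, bivariatePencil_map_eval, ← Matrix.mul_assoc]
    exact hP (x 0) (x 1)
  refine exists_eq_mul_of_mul_eq_mul (V := (bivariatePencil A₁ B₁ C₁)ᵀ) ?_
    (by rwa [det_bivariatePencil]) hmul
  rw [Matrix.det_transpose, det_bivariatePencil, det_bivariatePencil]
  exact hco.symm

lemma eq_zero_of_vec_mem_GKer_Delta1
    (hco : IsRelPrime (charPoly A₁ B₁ C₁) (charPoly A₂ B₂ C₂))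
    (hdvd : ¬ MvPolynomial.X 0 - MvPolynomial.C l₀ ∣ charPoly A₂ B₂ C₂)
    (hZ : Wmat A₂ B₂ C₂ l₀ m₀ * Z = 0)
    (hmem : vec Z ∈ GKer (Delta1 A₁ C₁ A₂ C₂) (Delta0 B₁ C₁ B₂ C₂) l₀) : Z = 0 := by
  obtain ⟨P, hP, hPZ⟩ := vec_mem_GKer_Delta1_iff.1 hmem
  obtain ⟨Q, hQ⟩ := exists_map_C_mul_eq_bivariatePencil_mul hco
    (fun h => hdvd (h ▸ dvd_zero _)) hP
  obtain ⟨P', hP'⟩ := exists_map_aeval_X_eq_add P (0 : Fin 2) l₀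
  rw [hPZ] at hP'
  let a : MvPolynomial (Fin 2) ℂ := MvPolynomial.X 0 - MvPolynomial.C l₀
  let b : MvPolynomial (Fin 2) ℂ := MvPolynomial.X 1 - MvPolynomial.C m₀
  let Z' : Matrix (Fin n₂) (Fin n₁) (MvPolynomial (Fin 2) ℂ) := Z.map MvPolynomial.C
  have hfactor : bivariatePencil A₂ B₂ C₂ * (Z' - b • Q) =
      a • (B₂.map (MvPolynomial.C (σ := Fin 2)) * Z' -
        b • (C₂.map (MvPolynomial.C (σ := Fin 2)) * P')) := by
    have hWZ : (Wmat A₂ B₂ C₂ l₀ m₀).map (MvPolynomial.C (σ := Fin 2)) * Z' = 0 := by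
      rw [← Matrix.map_mul, hZ, Matrix.map_zero _ (map_zero _)]
    rw [Matrix.mul_sub, Matrix.mul_smul, ← hQ, hP', bivariatePencil_eq_add A₂ B₂ C₂ l₀ m₀,
      Matrix.add_mul, Matrix.add_mul, hWZ, Matrix.smul_mul, Matrix.smul_mul, Matrix.mul_add,
      Matrix.mul_smul]
    module
  ext i j
  obtain ⟨r, hr⟩ := dvd_apply_of_mul_eq_smul (mvPolynomial_prime_X_sub_C 0 l₀) hdvd hfactor i j
  simpa [Z', b] using congrArg (MvPolynomial.eval ![l₀, m₀]) hr

lemma vec_notMem_GKer_Delta1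
    (hco : IsRelPrime (charPoly A₁ B₁ C₁) (charPoly A₂ B₂ C₂)) (hZ : Z ≠ 0)
    (hZ₁ : Z * (Wmat A₁ B₁ C₁ l₀ m₀)ᵀ = 0) (hZ₂ : Wmat A₂ B₂ C₂ l₀ m₀ * Z = 0) :
    vec Z ∉ GKer (Delta1 A₁ C₁ A₂ C₂) (Delta0 B₁ C₁ B₂ C₂) l₀ := by
  intro hmem
  by_cases hdvd₂ : MvPolynomial.X 0 - MvPolynomial.C l₀ ∣ charPoly A₂ B₂ C₂
  · have hdvd₁ : ¬ MvPolynomial.X 0 - MvPolynomial.C l₀ ∣ charPoly A₁ B₁ C₁ := fun h =>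
      (mvPolynomial_prime_X_sub_C 0 l₀).not_isUnit (hco h hdvd₂)
    refine hZ (Matrix.transpose_eq_zero.1 (eq_zero_of_vec_mem_GKer_Delta1 (m₀ := m₀) hco.symm
      hdvd₁ ?_ (vec_transpose_mem_GKer_Delta1 hmem)))
    rw [← Matrix.transpose_transpose (Wmat _ _ _ _ _), ← Matrix.transpose_mul, hZ₁,
      Matrix.transpose_zero]
  · exact hZ (eq_zero_of_vec_mem_GKer_Delta1 hco hdvd₂ hZ₂ hmem)

end CoprimeCharPoly

section FiniteEigenvalues

variable {n₁ n₂ : ℕ} {A₁ B₁ C₁ : Matrix (Fin n₁) (Fin n₁) ℂ}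
  {A₂ B₂ C₂ : Matrix (Fin n₂) (Fin n₂) ℂ} {l₀ m₀ : ℂ}

lemma isFiniteEigW_iff_det_eq_zero
    (hcoprime : ∀ q : MvPolynomial (Fin 2) ℂ,
      q ∣ charPoly A₁ B₁ C₁ → q ∣ charPoly A₂ B₂ C₂ → ∃ c : ℂ, q = MvPolynomial.C c) :
    IsFiniteEigW A₁ B₁ C₁ A₂ B₂ C₂ l₀ m₀ ↔
      (Wmat A₁ B₁ C₁ l₀ m₀).det = 0 ∧ (Wmat A₂ B₂ C₂ l₀ m₀).det = 0 := by
  rw [IsFiniteEigW, ← Matrix.exists_mulVec_eq_zero_iff, ← Matrix.exists_mulVec_eq_zero_iff]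
  exact and_iff_right fun q h₁ h₂ hq => absurd (hcoprime q h₁ h₂) hq

lemma isFiniteEigDelta_iff_exists_notMem_GKer :
    IsFiniteEigDelta A₁ B₁ C₁ A₂ B₂ C₂ l₀ m₀ ↔
      ∃ z, (Delta1 A₁ C₁ A₂ C₂ - l₀ • Delta0 B₁ C₁ B₂ C₂) *ᵥ z = 0 ∧
        (Delta2 A₁ B₁ A₂ B₂ - m₀ • Delta0 B₁ C₁ B₂ C₂) *ᵥ z = 0 ∧
        z ∉ GKer (Delta1 A₁ C₁ A₂ C₂) (Delta0 B₁ C₁ B₂ C₂) l₀ ∧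
        z ∉ GKer (Delta2 A₁ B₁ A₂ B₂) (Delta0 B₁ C₁ B₂ C₂) m₀ := by
  have hsub (A B : Matrix (Fin n₁ × Fin n₂) (Fin n₁ × Fin n₂) ℂ) (t : ℂ)
      (z : Fin n₁ × Fin n₂ → ℂ) : (A - t • B) *ᵥ z = 0 ↔ A *ᵥ z = t • B *ᵥ z := by
    rw [Matrix.sub_mulVec, Matrix.smul_mulVec, sub_eq_zero]
  constructor
  · rintro ⟨-, -, z, -, h₁, h₂, hz₁, hz₂⟩
    rw [← hsub] at h₁ h₂
    rw [mem_RedMin_iff_mem_GKer h₁] at hz₁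
    rw [mem_RedMin_iff_mem_GKer h₂] at hz₂
    exact ⟨z, h₁, h₂, hz₁, hz₂⟩
  · rintro ⟨z, h₁, h₂, hz₁, hz₂⟩
    have hz : z ≠ 0 := fun h => hz₁ (h ▸ zero_mem _)
    exact ⟨rank_lt_nrank_of_notMem_GKer h₁ hz₁, rank_lt_nrank_of_notMem_GKer h₂ hz₂, z, hz,
      (hsub ..).1 h₁, (hsub ..).1 h₂, mt (mem_RedMin_iff_mem_GKer h₁).1 hz₁,
      mt (mem_RedMin_iff_mem_GKer h₂).1 hz₂⟩

lemma det_Wmat_eq_zero_of_vec_notMem_GKer {Z : Matrix (Fin n₂) (Fin n₁) ℂ}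
    (hB : Wmat A₂ B₂ C₂ l₀ m₀ * Z * B₁ᵀ = B₂ * Z * (Wmat A₁ B₁ C₁ l₀ m₀)ᵀ)
    (hC : Wmat A₂ B₂ C₂ l₀ m₀ * Z * C₁ᵀ = C₂ * Z * (Wmat A₁ B₁ C₁ l₀ m₀)ᵀ)
    (hZ : vec Z ∉ GKer (Delta1 A₁ C₁ A₂ C₂) (Delta0 B₁ C₁ B₂ C₂) l₀) :
    (Wmat A₁ B₁ C₁ l₀ m₀).det = 0 ∧ (Wmat A₂ B₂ C₂ l₀ m₀).det = 0 := by
  refine ⟨by_contra fun hdet => hZ ?_,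
    by_contra fun hdet => hZ (vec_mem_GKer_Delta1_of_det_ne_zero hdet hB hC)⟩
  have hT {M : Matrix (Fin n₁) (Fin n₁) ℂ} {L : Matrix (Fin n₂) (Fin n₂) ℂ}
      (h : Wmat A₂ B₂ C₂ l₀ m₀ * Z * Mᵀ = L * Z * (Wmat A₁ B₁ C₁ l₀ m₀)ᵀ) :
      Wmat A₁ B₁ C₁ l₀ m₀ * Zᵀ * Lᵀ = M * Zᵀ * (Wmat A₂ B₂ C₂ l₀ m₀)ᵀ := by
    simpa only [Matrix.transpose_mul, Matrix.transpose_transpose, Matrix.mul_assoc]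
      using (congrArg Matrix.transpose h).symm
  exact vec_transpose_mem_GKer_Delta1 (vec_mem_GKer_Delta1_of_det_ne_zero hdet (hT hB) (hT hC))

end FiniteEigenvalues

theorem eigW_iff_eigDelta_general {n₁ n₂ : ℕ}
    (A₁ B₁ C₁ : Matrix (Fin n₁) (Fin n₁) ℂ) (A₂ B₂ C₂ : Matrix (Fin n₂) (Fin n₂) ℂ)
    (l₀ m₀ : ℂ)
    (hcoprime : ∀ q : MvPolynomial (Fin 2) ℂ,
      q ∣ charPoly A₁ B₁ C₁ → q ∣ charPoly A₂ B₂ C₂ → ∃ c : ℂ, q = MvPolynomial.C c) :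
    IsFiniteEigW A₁ B₁ C₁ A₂ B₂ C₂ l₀ m₀ ↔
      IsFiniteEigDelta A₁ B₁ C₁ A₂ B₂ C₂ l₀ m₀ := by
  rw [isFiniteEigW_iff_det_eq_zero hcoprime, isFiniteEigDelta_iff_exists_notMem_GKer]
  constructor
  · rintro ⟨hdet₁, hdet₂⟩
    obtain ⟨Z, hZ, hZ₁, hZ₂⟩ := exists_ne_zero_mul_eq_zero hdet₁ hdet₂
    have hco := mvPolynomial_isRelPrime_of_forall_dvd_eq_C hcoprime
    refine ⟨vec Z, ?_, ?_, vec_notMem_GKer_Delta1 hco hZ hZ₁ hZ₂, ?_⟩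
    · rw [Delta1_sub_smul_Delta0_mulVec_vec_eq_zero_iff l₀ m₀, hZ₂, Matrix.mul_assoc C₂, hZ₁,
        Matrix.zero_mul, Matrix.mul_zero]
    · rw [Delta2_sub_smul_Delta0_mulVec_vec_eq_zero_iff l₀ m₀, hZ₂, Matrix.mul_assoc B₂, hZ₁,
        Matrix.zero_mul, Matrix.mul_zero]
    · rw [← Wmat_swap] at hZ₁ hZ₂
      rw [GKer_Delta2]
      exact vec_notMem_GKer_Delta1 (isRelPrime_charPoly_swap hco) hZ hZ₁ hZ₂
  · rintro ⟨z, hΔ₁, hΔ₂, hz, -⟩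
    obtain ⟨Z, rfl⟩ := Matrix.vec_bijective.surjective z
    exact det_Wmat_eq_zero_of_vec_notMem_GKer
      ((Delta2_sub_smul_Delta0_mulVec_vec_eq_zero_iff l₀ m₀).1 hΔ₂)
      ((Delta1_sub_smul_Delta0_mulVec_vec_eq_zero_iff l₀ m₀).1 hΔ₁) hz

/-- **Theorem (equivalence, coprime case).** If the pencils `W₁, W₂` are regular, the
characteristic polynomials `p₁, p₂` are coprime (no nonconstant common divisor), and
the genericity conditions (1)–(6) hold at `(λ₀,μ₀)`, then `(λ₀,μ₀)` is a finite
eigenvalue of the two-parameter problem if and only if it is a finite eigenvalue of the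
associated pair of pencils `(Δ₁ − λΔ₀, Δ₂ − μΔ₀)`. -/
theorem eigW_iff_eigDelta {n₁ n₂ : ℕ}
    (A₁ B₁ C₁ : Matrix (Fin n₁) (Fin n₁) ℂ) (A₂ B₂ C₂ : Matrix (Fin n₂) (Fin n₂) ℂ)
    (l₀ m₀ : ℂ)
    (hreg₁ : charPoly A₁ B₁ C₁ ≠ 0) (hreg₂ : charPoly A₂ B₂ C₂ ≠ 0)
    (hcoprime : ∀ q : MvPolynomial (Fin 2) ℂ,
      q ∣ charPoly A₁ B₁ C₁ → q ∣ charPoly A₂ B₂ C₂ → ∃ c : ℂ, q = MvPolynomial.C c)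
    (hgen : Generic A₁ B₁ C₁ A₂ B₂ C₂ l₀ m₀) :
    IsFiniteEigW A₁ B₁ C₁ A₂ B₂ C₂ l₀ m₀ ↔
      IsFiniteEigDelta A₁ B₁ C₁ A₂ B₂ C₂ l₀ m₀ :=
  eigW_iff_eigDelta_general A₁ B₁ C₁ A₂ B₂ C₂ l₀ m₀ hcoprime
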